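/- arXiv:1611.07414 — 5 statements merged into one kernel-verified Lean document; each statement's English description precedes it below -/
import Mathlib

section
/- There is an absolute constant A > 0 with the following property. Let there be m machines with demands D_1,…,D_m > 0 and cardinality bounds f_1,…,f_m ∈ ℕ, and n job types with capacities c_1,…,c_n > 0, and let s ∈ ℕ^n be an integer supply vector. If there exists a fractional configuration solution for s, then there exist nonnegative integers n_{ij} with Σ_i n_{ij} ≤ s_j for every job type j, Σ_j n_{ij} ≤ f_i for every machine i, and Σ_j n_{ij}·c_j ≥ D_i / (A·(1 + ln(max_i D_i / min_i D_i))) for every machine i. -/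
open Finset

/-- A fractional configuration-LP solution for a CCKP instance (`m` machines with demands
`D` and cardinality bounds `f`, `n` job types with capacities `c`) and supply vector `s`:
a finitely supported family `z(i, S) ≥ 0` over configurations `S` (multisets of job types,
encoded as functions `Fin n → ℕ`, with `|S| ≤ f i` and total capacity at least `D i`),
with `Σ_S z(i,S) = 1` for every machine `i` and `Σ_{i,S} z(i,S)·S(j) ≤ s j` for every `j`. -/
def ConfigSol (m n : ℕ) (D : Fin m → ℝ) (f : Fin m → ℕ) (c : Fin n → ℝ)
    (s : Fin n → ℝ) : Prop :=
  ∃ (𝒮 : Finset (Fin n → ℕ)) (z : Fin m → (Fin n → ℕ) → ℝ),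
    (∀ i S, 0 ≤ z i S) ∧
    (∀ i S, S ∉ 𝒮 → z i S = 0) ∧
    (∀ i S, 0 < z i S → (∑ j, S j ≤ f i ∧ D i ≤ ∑ j, (S j : ℝ) * c j)) ∧
    (∀ i, ∑ S ∈ 𝒮, z i S = 1) ∧
    (∀ j, ∑ i, ∑ S ∈ 𝒮, z i S * (S j : ℝ) ≤ s j)

/-!
Round the demands down to powers of two, leaving `K = O(1 + log (Dmax / Dmin))` demand classes, and
call a job large for a machine of demand `d` if its capacity is at least `d / (2K)`. Replacing each
configuration that contains a large job by that single job, machine `i` receives a mass `y i` of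
large jobs and a mass `1 - y i` of configurations of small jobs. Two machines of one class can trade
large for small mass, the one with the smaller cardinality bound taking the large jobs, until one of
them is integral; so at most one machine per class has `0 < y i < 1`.

If `y i ≤ 1 - 1/K`, the small jobs of `i` have total capacity at least `d / K`, and greedy grouping
into slots of unit mass loses at most the capacity `d / (2K)` of one small job. Otherwise a single
slot for a large job suffices, and its mass falls short of one by less than `1/K`. The total
shortage is below one, hence invisible to the integral Hall condition, and all slots can be filled.
-/

section Transfer

variable {ι M : Type*} [DecidableEq ι] [AddCommGroup M]

/-- The family `F` after moving the amount `v` from its entry `p` to its entry `q`. -/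
def transfer (p q : ι) (v : M) (F : ι → M) : ι → M :=
  F - Pi.single p v + Pi.single q v

variable {p q : ι}

lemma transfer_apply_source (hpq : p ≠ q) (v : M) (F : ι → M) :
    transfer p q v F p = F p - v := by
  simp [transfer, hpq]

lemma transfer_apply_target (hpq : p ≠ q) (v : M) (F : ι → M) :
    transfer p q v F q = F q + v := by
  simp [transfer, hpq.symm]

lemma transfer_apply_of_ne {i : ι} (hp : i ≠ p) (hq : i ≠ q) (v : M) (F : ι → M) :
    transfer p q v F i = F i := by
  simp [transfer, hp, hq]

lemma transfer_const_sub (a v : M) (F : ι → M) (i : ι) :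
    transfer p q v (fun i => a - F i) i = a - transfer q p v F i := by
  simp only [transfer, Pi.add_apply, Pi.sub_apply]
  abel

lemma transfer_prodMk {M' : Type*} [AddCommGroup M'] (v : M) (v' : M') (F : ι → M) (F' : ι → M')
    (i : ι) :
    transfer p q (v, v') (fun i => (F i, F' i)) i = (transfer p q v F i, transfer p q v' F' i) := by
  simp only [transfer, Pi.add_apply, Pi.sub_apply, Pi.single_apply]
  split_ifs <;> simp

lemma sum_transfer [Fintype ι] (p q : ι) (v : M) (F : ι → M) :
    ∑ i, transfer p q v F i = ∑ i, F i := by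
  simp [transfer, sum_add_distrib, sum_sub_distrib]

lemma transfer_smul_mem [Module ℝ M] {C : ι → PointedCone ℝ M} (hC : C p ≤ C q) (hpq : p ≠ q)
    {v : ι → M} (hv : ∀ i, v i ∈ C i) {r : ℝ} (hr0 : 0 ≤ r) (hr1 : r ≤ 1) (i : ι) :
    transfer p q (r • v p) v i ∈ C i := by
  rcases eq_or_ne i p with rfl | hip
  · rw [transfer_apply_source hpq, show v i - r • v i = (1 - r) • v i by module]
    exact (C i).smul_mem (sub_nonneg.2 hr1) (hv i)
  rcases eq_or_ne i q with rfl | hiq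
  · rw [transfer_apply_target hpq]
    exact add_mem (hv i) ((C i).smul_mem hr0 (hC (hv p)))
  · rw [transfer_apply_of_ne hip hiq]
    exact hv i

end Transfer

section SlotAssignment

variable {ι J : Type*}

lemma exists_assignment_of_card_le_sum_biUnion {α : Type*} [Fintype α] [DecidableEq J]
    {t : α → Finset J} {s : J → ℕ} (h : ∀ A : Finset α, #A ≤ ∑ j ∈ A.biUnion t, s j) :
    ∃ φ : α → J, (∀ a, φ a ∈ t a) ∧ ∀ j, #{a | φ a = j} ≤ s j := by
  classical
  let copies : α → Finset (Σ j, Fin (s j)) := fun a => (t a).sigma fun _ => univ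
  have hall (A : Finset α) : #A ≤ #(A.biUnion copies) := by
    have hcopies : A.biUnion copies = (A.biUnion t).sigma fun _ => univ := by
      ext; simp [copies]
    simpa [hcopies] using h A
  obtain ⟨ψ, hinj, hψ⟩ := (all_card_le_biUnion_card_iff_exists_injective copies).1 hall
  refine ⟨fun a => (ψ a).1, fun a => (mem_sigma.1 (hψ a)).1, fun j => ?_⟩
  calc #{a | (ψ a).1 = j}
      ≤ #(({j} : Finset J).sigma fun j => (univ : Finset (Fin (s j)))) :=
        card_le_card_of_injOn ψ (fun a ha => by simpa using ha) hinj.injOn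
    _ = s j := by simp

/-- The fractional bundle `u` covers the slots with admissible job types `T 0, …, T (N - 1)` up to
the defect `δ`: the types admissible for slot `g` carry enough mass for the slots `0, …, g`. -/
structure IsSlotCover {N : ℕ} (T : Fin N → Finset J) (u : J → ℝ) (δ : ℝ) : Prop where
  nonneg : ∀ j, 0 ≤ u j
  defect_nonneg : 0 ≤ δ
  cover : ∀ g : Fin N, (g : ℝ) + 1 - δ ≤ ∑ j ∈ T g, u j

lemma IsSlotCover.mono {N : ℕ} {T : Fin N → Finset J} {u v : J → ℝ} {δ : ℝ}
    (h : IsSlotCover T u δ) (huv : u ≤ v) : IsSlotCover T v δ where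
  nonneg j := (h.nonneg j).trans (huv j)
  defect_nonneg := h.defect_nonneg
  cover g := (h.cover g).trans (sum_le_sum fun j _ => huv j)

lemma IsSlotCover.card_sub_le_sum_biUnion [DecidableEq J] {N : ℕ} {T : Fin N → Finset J}
    {u : J → ℝ} {δ : ℝ} (h : IsSlotCover T u δ) (B : Finset (Fin N)) :
    (#B : ℝ) - δ ≤ ∑ j ∈ B.biUnion T, u j := by
  rcases B.eq_empty_or_nonempty with rfl | hB
  · simpa using h.defect_nonneg
  · have hcard : (#B : ℝ) ≤ (B.max' hB : ℕ) + 1 := by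
      have := card_le_card (t := Iic (B.max' hB)) fun g hg => mem_Iic.2 (B.le_max' g hg)
      rw [Fin.card_Iic] at this
      exact_mod_cast this
    calc (#B : ℝ) - δ ≤ (B.max' hB : ℕ) + 1 - δ := by gcongr
      _ ≤ ∑ j ∈ T (B.max' hB), u j := h.cover _
      _ ≤ ∑ j ∈ B.biUnion T, u j :=
        sum_le_sum_of_subset_of_nonneg (subset_biUnion_of_mem T (B.max'_mem hB))
          fun j _ _ => h.nonneg j

-- Hall's condition compares integers, so a total defect below one does not affect it.
lemma exists_slot_assignment [Fintype ι] [DecidableEq J] {N : ι → ℕ}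
    {T : ∀ i, Fin (N i) → Finset J} {u : ι → J → ℝ} {δ : ι → ℝ} {s : J → ℕ}
    (hT : ∀ i, IsSlotCover (T i) (u i) (δ i)) (hs : ∀ j, ∑ i, u i j ≤ s j)
    (hδ : ∑ i, δ i < 1) :
    ∃ φ : ∀ i, Fin (N i) → J, (∀ i g, φ i g ∈ T i g) ∧ ∀ j, ∑ i, #{g | φ i g = j} ≤ s j := by
  classical
  let t : (Σ i, Fin (N i)) → Finset J := fun p => T p.1 p.2
  have hall (A : Finset (Σ i, Fin (N i))) : #A ≤ ∑ j ∈ A.biUnion t, s j := by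
    let B (i : ι) : Finset (Fin (N i)) :=
      A.preimage (Sigma.mk (β := fun i => Fin (N i)) i) sigma_mk_injective.injOn
    have hA : #A = ∑ i, #(B i) := by
      rw [← card_sigma, sigma_preimage_mk_of_subset A (subset_univ _)]
    have hB (i : ι) : (B i).biUnion (T i) ⊆ A.biUnion t := by
      intro j hj
      obtain ⟨g, hg, hjg⟩ := mem_biUnion.1 hj
      exact mem_biUnion.2 ⟨⟨i, g⟩, mem_preimage.1 hg, hjg⟩
    have hreal : (#A : ℝ) - ∑ i, δ i ≤ ∑ j ∈ A.biUnion t, (s j : ℝ) :=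
      calc (#A : ℝ) - ∑ i, δ i = ∑ i, ((#(B i) : ℝ) - δ i) := by
            rw [hA, sum_sub_distrib, Nat.cast_sum]
        _ ≤ ∑ i, ∑ j ∈ A.biUnion t, u i j := sum_le_sum fun i _ =>
            ((hT i).card_sub_le_sum_biUnion (B i)).trans <|
              sum_le_sum_of_subset_of_nonneg (hB i) fun j _ _ => (hT i).nonneg j
        _ = ∑ j ∈ A.biUnion t, ∑ i, u i j := sum_comm
        _ ≤ ∑ j ∈ A.biUnion t, (s j : ℝ) := sum_le_sum fun j _ => hs j
    have hlt : (#A : ℝ) < ∑ j ∈ A.biUnion t, (s j : ℝ) + 1 := by linarith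
    exact Nat.lt_succ_iff.1 (by exact_mod_cast hlt)
  obtain ⟨φ, hφ, hφs⟩ := exists_assignment_of_card_le_sum_biUnion hall
  refine ⟨fun i g => φ ⟨i, g⟩, fun i g => hφ ⟨i, g⟩, fun j => ?_⟩
  calc ∑ i, #{g | φ ⟨i, g⟩ = j} = #(univ.sigma fun i => {g | φ ⟨i, g⟩ = j}) :=
        (card_sigma _ _).symm
    _ = #{p | φ p = j} := congrArg card (by ext; simp)
    _ ≤ s j := hφs j

end SlotAssignment

section Thresholds

variable {J : Type*}

lemma sum_range_ite_lt_const {M N : ℕ} (hMN : M ≤ N) (θ : ℕ → ℝ) (a : ℝ) :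
    ∑ g ∈ range N, (if g < M then θ g else a) = ∑ g ∈ range M, θ g + ((N : ℝ) - M) * a := by
  rw [← sum_range_add_sum_Ico _ hMN]
  congr 1
  · exact sum_congr rfl fun g hg => if_pos (mem_range.1 hg)
  · rw [sum_congr rfl fun g hg => if_neg (mem_Ico.1 hg).1.not_gt, sum_const, Nat.card_Ico,
      nsmul_eq_mul, Nat.cast_sub hMN]

-- Jobs are added in order of decreasing capacity, and a slot completed by a job gets that job's
-- capacity as its threshold. The losses telescope along the capacities: as long as all capacities
-- are at least `a`, the loss is at most `τ - a` plus `a` times the fractional part of the mass.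
lemma exists_slot_thresholds {c x : J → ℝ} {τ : ℝ} (hx : ∀ j, 0 ≤ x j) (T : Finset J)
    (hτ : ∀ j ∈ T, c j ≤ τ) :
    ∃ θ : ℕ → ℝ,
      (∀ g < ⌊∑ j ∈ T, x j⌋₊, (g : ℝ) + 1 ≤ ∑ j ∈ T with θ g ≤ c j, x j) ∧
      ∀ a ≤ τ, (∀ j ∈ T, a ≤ c j) →
        ∑ j ∈ T, x j * c j + a * (1 - (∑ j ∈ T, x j - ⌊∑ j ∈ T, x j⌋₊)) ≤
          ∑ g ∈ range ⌊∑ j ∈ T, x j⌋₊, θ g + τ := by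
  classical
  induction T using Finset.induction_on_min_value c with
  | empty => exact ⟨0, by simp, by simp⟩
  | insert k T hk hmin ih =>
    obtain ⟨θ, hθ, hloss⟩ := ih fun j hj => hτ j (mem_insert_of_mem hj)
    rw [sum_insert hk, sum_insert hk]
    set X := ∑ j ∈ T, x j with hX
    have hX0 : 0 ≤ X := sum_nonneg fun j _ => hx j
    have hkX : 0 ≤ x k + X := add_nonneg (hx k) hX0
    refine ⟨fun g => if g < ⌊X⌋₊ then θ g else c k, fun g hg => ?_, fun a _ ha => ?_⟩
    · dsimp only
      split_ifs with hgX
      · exact (hθ g hgX).trans <| sum_le_sum_of_subset_of_nonneg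
          (filter_subset_filter _ (subset_insert k T)) fun j _ _ => hx j
      · have hall : ∀ j ∈ insert k T, c k ≤ c j := forall_mem_insert _ _ _ |>.2 ⟨le_rfl, hmin⟩
        rw [filter_true_of_mem hall, sum_insert hk, ← hX]
        exact_mod_cast (Nat.le_floor_iff hkX).1 (Nat.succ_le_of_lt hg)
    · rw [sum_range_ite_lt_const (Nat.floor_le_floor (le_add_of_nonneg_left (hx k)))]
      have hold := hloss (c k) (hτ k (mem_insert_self k T)) hmin
      have hlow : a * (1 - (x k + X - ⌊x k + X⌋₊)) ≤ c k * (1 - (x k + X - ⌊x k + X⌋₊)) :=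
        mul_le_mul_of_nonneg_right (ha k (mem_insert_self k T))
          (by linarith [Nat.lt_floor_add_one (x k + X)])
      linarith

end Thresholds

section Cones

variable {J : Type*} [Fintype J] {c : J → ℝ} {d τ : ℝ} {f : ℕ} {x b : J → ℝ} {w y : ℝ}

/-- The pairs `(x, w)` of a fractional bundle `x` and a mass `w` such that `x` behaves like a
`w`-fold multiple of a configuration for demand `d` and cardinality bound `f` which contains only
small jobs, i.e. jobs of capacity below `τ`. -/
def smallCone (c : J → ℝ) (d τ : ℝ) (f : ℕ) : PointedCone ℝ ((J → ℝ) × ℝ) where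
  carrier := {p | 0 ≤ p ∧ (∀ j, τ ≤ c j → p.1 j = 0) ∧ ∑ j, p.1 j ≤ f * p.2 ∧
    d * p.2 ≤ ∑ j, p.1 j * c j}
  zero_mem' := by simp
  add_mem' := by
    rintro p q ⟨hp0, hpτ, hpf, hpd⟩ ⟨hq0, hqτ, hqf, hqd⟩
    refine ⟨add_nonneg hp0 hq0, fun j hj => ?_, ?_, ?_⟩
    · simp [hpτ j hj, hqτ j hj]
    · simpa [sum_add_distrib, mul_add] using add_le_add hpf hqf
    · simpa [sum_add_distrib, add_mul, mul_add] using add_le_add hpd hqd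
  smul_mem' := by
    rintro ⟨r, hr⟩ p ⟨hp0, hpτ, hpf, hpd⟩
    refine ⟨smul_nonneg hr hp0, fun j hj => ?_, ?_, ?_⟩
    · simp [hpτ j hj]
    · simpa [← mul_sum, mul_left_comm] using mul_le_mul_of_nonneg_left hpf hr
    · simpa [← mul_sum, mul_assoc, mul_left_comm] using mul_le_mul_of_nonneg_left hpd hr

/-- The pairs `(b, y)` of a fractional bundle `b` of large jobs, i.e. jobs of capacity at least
`τ`, and its total mass `y`. -/
def largeCone (c : J → ℝ) (τ : ℝ) : PointedCone ℝ ((J → ℝ) × ℝ) where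
  carrier := {p | 0 ≤ p ∧ (∀ j, c j < τ → p.1 j = 0) ∧ ∑ j, p.1 j = p.2}
  zero_mem' := by simp
  add_mem' := by
    rintro p q ⟨hp0, hpτ, hp⟩ ⟨hq0, hqτ, hq⟩
    refine ⟨add_nonneg hp0 hq0, fun j hj => ?_, ?_⟩
    · simp [hpτ j hj, hqτ j hj]
    · simp [sum_add_distrib, hp, hq]
  smul_mem' := by
    rintro ⟨r, hr⟩ p ⟨hp0, hpτ, hp⟩
    refine ⟨smul_nonneg hr hp0, fun j hj => ?_, ?_⟩
    · simp [hpτ j hj]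
    · simp [← mul_sum, hp]

lemma smallCone_mono {f' : ℕ} (hf : f ≤ f') : smallCone c d τ f ≤ smallCone c d τ f' := by
  rintro p ⟨hp0, hpτ, hpf, hpd⟩
  exact ⟨hp0, hpτ, hpf.trans (mul_le_mul_of_nonneg_right (Nat.cast_le.2 hf) hp0.2), hpd⟩

lemma isSlotCover_of_mem_largeCone (hb : (b, y) ∈ largeCone c τ) (hy : y ≤ 1) :
    IsSlotCover (fun _ : Fin 1 => {j | τ ≤ c j}) b (1 - y) where
  nonneg := hb.1.1
  defect_nonneg := sub_nonneg.2 hy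
  cover g := by
    obtain ⟨-, hbτ, hby⟩ := hb
    have hlarge : ∑ j with τ ≤ c j, b j = y := by
      rw [sum_filter_of_ne fun j _ hj => not_lt.1 (mt (hbτ j) hj)]
      exact hby
    simp [hlarge]

lemma exists_isSlotCover_of_mem_smallCone (hc : ∀ j, 0 ≤ c j) (hτ : 0 ≤ τ)
    (hx : (x, w) ∈ smallCone c d τ f) (hw : w ≤ 1) (hd : 2 * τ ≤ d * w) :
    ∃ N ≤ f, ∃ T : Fin N → Finset J, IsSlotCover T x 0 ∧
      ∀ φ : Fin N → J, (∀ g, φ g ∈ T g) → τ ≤ ∑ g, c (φ g) := by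
  obtain ⟨⟨hx0, -⟩, hxτ, hxf, hxd⟩ := hx
  dsimp only at hx0 hxτ hxf hxd
  have hsmall : ∀ j, x j ≠ 0 → c j < τ := fun j hj => not_le.1 (mt (hxτ j) hj)
  have hmass : ∑ j with c j < τ, x j = ∑ j, x j := sum_filter_of_ne fun j _ => hsmall j
  have hcap : ∑ j with c j < τ, x j * c j = ∑ j, x j * c j :=
    sum_filter_of_ne fun j _ hj => hsmall j (left_ne_zero_of_mul hj)
  obtain ⟨θ, hθ, hloss⟩ := exists_slot_thresholds hx0 {j | c j < τ}
    fun j hj => (mem_filter.1 hj).2.le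
  have hθsum := hloss 0 hτ fun j _ => hc j
  rw [hmass] at hθ hθsum
  rw [hcap, zero_mul, add_zero] at hθsum
  refine ⟨⌊∑ j, x j⌋₊, Nat.floor_le_of_le (hxf.trans ?_), fun g => {j | θ g ≤ c j},
    ⟨hx0, le_rfl, fun g => ?_⟩, fun φ hφ => ?_⟩
  · exact mul_le_of_le_one_right (Nat.cast_nonneg f) hw
  · rw [sub_zero]
    exact (hθ g g.2).trans <| sum_le_sum_of_subset_of_nonneg
      (filter_subset_filter _ (subset_univ _)) fun j _ _ => hx0 j
  · have hφθ : ∑ g ∈ range ⌊∑ j, x j⌋₊, θ g ≤ ∑ g, c (φ g) := by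
      rw [sum_range]
      exact sum_le_sum fun g _ => (mem_filter.1 (hφ g)).2
    linarith

lemma exists_cone_split_of_configuration {S : J → ℕ} (c : J → ℝ) (τ : ℝ) (hf : ∑ j, S j ≤ f)
    (hd : d ≤ ∑ j, (S j : ℝ) * c j) :
    ∃ (x b : J → ℝ) (y : ℝ), (x, 1 - y) ∈ smallCone c d τ f ∧ (b, y) ∈ largeCone c τ ∧
      x + b ≤ fun j => (S j : ℝ) := by
  classical
  by_cases hlarge : ∃ k, 0 < S k ∧ τ ≤ c k
  · obtain ⟨k, hk, hτk⟩ := hlarge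
    refine ⟨0, Pi.single k 1, 1, ?_, ⟨⟨?_, zero_le_one⟩, fun j hj => ?_, ?_⟩, fun j => ?_⟩
    · rw [sub_self]
      exact zero_mem _
    · exact Pi.single_nonneg.2 zero_le_one
    · have hjk : j ≠ k := by
        rintro rfl
        exact hj.not_ge hτk
      exact Pi.single_eq_of_ne hjk 1
    · simp
    · rcases eq_or_ne j k with rfl | hj
      · simpa using Nat.one_le_iff_ne_zero.2 hk.ne'
      · simp [hj]
  · push Not at hlarge
    refine ⟨fun j => S j, 0, 0, ⟨⟨fun j => ?_, ?_⟩, fun j hj => ?_, ?_, ?_⟩, zero_mem _, ?_⟩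
    · exact Nat.cast_nonneg (S j)
    · simp
    · have := mt (hlarge j) hj.not_gt
      simpa using this
    · simpa using (mod_cast hf : ∑ j, (S j : ℝ) ≤ f)
    · simpa using hd
    · simp

end Cones

/-- The set of indices at which `y` lies strictly between `0` and `1`; for the large masses of a
split solution, the machines whose choice between large and small jobs is still undecided. -/
noncomputable def fractional {ι : Type*} [Fintype ι] (y : ι → ℝ) : Finset ι :=
  {i | y i ∈ Set.Ioo 0 1}

/-- A fractional solution in which machine `i` gets a bundle `b i` of large jobs of mass `y i` and
a bundle `x i` of small jobs of mass `1 - y i`. Jobs are large for a machine of demand `t` if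
their capacity is at least `τ t`, so that machines of equal demand agree on this. -/
structure IsSplitSol {ι J : Type*} [Fintype ι] [Fintype J] (τ : ℝ → ℝ) (d : ι → ℝ) (f : ι → ℕ)
    (c s : J → ℝ) (x b : ι → J → ℝ) (y : ι → ℝ) : Prop where
  small_mem : ∀ i, (x i, 1 - y i) ∈ smallCone c (d i) (τ (d i)) (f i)
  large_mem : ∀ i, (b i, y i) ∈ largeCone c (τ (d i))
  supply : ∑ i, (x i + b i) ≤ s

namespace IsSplitSol

variable {ι J : Type*} [Fintype ι] [Fintype J] {τ : ℝ → ℝ} {d : ι → ℝ} {f : ι → ℕ}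
  {c s : J → ℝ} {x b : ι → J → ℝ} {y : ι → ℝ} {p q : ι}

lemma small_nonneg (h : IsSplitSol τ d f c s x b y) (i : ι) : 0 ≤ x i := (h.small_mem i).1.1

lemma large_nonneg (h : IsSplitSol τ d f c s x b y) (i : ι) : 0 ≤ b i := (h.large_mem i).1.1

lemma mass_nonneg (h : IsSplitSol τ d f c s x b y) (i : ι) : 0 ≤ y i := (h.large_mem i).1.2

lemma mass_le_one (h : IsSplitSol τ d f c s x b y) (i : ι) : y i ≤ 1 :=
  sub_nonneg.1 (h.small_mem i).1.2

-- Machine `p` hands a proportional part of its small bundle to `q`, whose cardinality bound is no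
-- smaller, and gets large jobs of the same mass in return.
lemma exchange [DecidableEq ι] (h : IsSplitSol τ d f c s x b y) (hpq : p ≠ q) (hd : d p = d q)
    (hf : f p ≤ f q) (hp : y p < 1) (hq : 0 < y q) {ε : ℝ} (hε : 0 ≤ ε) (hεp : ε ≤ 1 - y p)
    (hεq : ε ≤ y q) :
    IsSplitSol τ d f c s (transfer p q ((ε / (1 - y p)) • x p) x)
      (transfer q p ((ε / y q) • b q) b) (transfer q p ε y) := by
  have hp' : 0 < 1 - y p := sub_pos.2 hp
  have hsmall : smallCone c (d p) (τ (d p)) (f p) ≤ smallCone c (d q) (τ (d q)) (f q) :=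
    hd ▸ smallCone_mono hf
  have hlarge : largeCone c (τ (d q)) ≤ largeCone c (τ (d p)) := by rw [hd]
  refine ⟨fun i => ?_, fun i => ?_, ?_⟩
  · have hmem := transfer_smul_mem (C := fun i => smallCone c (d i) (τ (d i)) (f i)) hsmall hpq
      h.small_mem (div_nonneg hε hp'.le) ((div_le_one hp').2 hεp) i
    rwa [Prod.smul_mk, smul_eq_mul, div_mul_cancel₀ _ hp'.ne', transfer_prodMk,
      transfer_const_sub] at hmem
  · have hmem := transfer_smul_mem (C := fun i => largeCone c (τ (d i))) hlarge hpq.symm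
      h.large_mem (div_nonneg hε hq.le) ((div_le_one hq).2 hεq) i
    rwa [Prod.smul_mk, smul_eq_mul, div_mul_cancel₀ _ hq.ne', transfer_prodMk] at hmem
  · simpa [sum_add_distrib, sum_transfer] using h.supply

lemma exists_fractional_ssubset (h : IsSplitSol τ d f c s x b y) (hpq : p ≠ q) (hd : d p = d q)
    (hf : f p ≤ f q) (hp : p ∈ fractional y) (hq : q ∈ fractional y) :
    ∃ x' b' y', IsSplitSol τ d f c s x' b' y' ∧ fractional y' ⊂ fractional y := by
  classical
  obtain ⟨hp0, hp1⟩ := (mem_filter.1 hp).2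
  obtain ⟨hq0, hq1⟩ := (mem_filter.1 hq).2
  let ε := min (1 - y p) (y q)
  have hε : 0 ≤ ε := le_min (sub_nonneg.2 hp1.le) hq0.le
  refine ⟨_, _, _, h.exchange hpq hd hf hp1 hq0 hε (min_le_left _ _) (min_le_right _ _), ?_⟩
  refine ssubset_iff_of_subset (fun i hi => ?_) |>.2 ?_
  · rcases eq_or_ne i p with rfl | hip
    · exact hp
    rcases eq_or_ne i q with rfl | hiq
    · exact hq
    · simpa [fractional, transfer_apply_of_ne hiq hip] using hi
  · rcases min_choice (1 - y p) (y q) with hmin | hmin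
    · have hy'p : transfer q p ε y p = 1 := by
        rw [transfer_apply_target hpq.symm, show ε = 1 - y p from hmin, add_sub_cancel]
      exact ⟨p, hp, fun hp' => (mem_filter.1 hp').2.2.ne hy'p⟩
    · have hy'q : transfer q p ε y q = 0 := by
        rw [transfer_apply_source hpq.symm, show ε = y q from hmin, sub_self]
      exact ⟨q, hq, fun hq' => (mem_filter.1 hq').2.1.ne' hy'q⟩

lemma exists_injOn_fractional (h : IsSplitSol τ d f c s x b y) :
    ∃ x' b' y', IsSplitSol τ d f c s x' b' y' ∧ Set.InjOn d (fractional y') := by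
  obtain ⟨⟨x, b, y⟩, h, hmin⟩ := exists_minimalFor_of_wellFoundedLT
    (fun t : (ι → J → ℝ) × (ι → J → ℝ) × (ι → ℝ) => IsSplitSol τ d f c s t.1 t.2.1 t.2.2)
    (fun t => fractional t.2.2) ⟨(x, b, y), h⟩
  refine ⟨x, b, y, h, fun p hp q hq hd => ?_⟩
  by_contra hpq
  wlog hf : f p ≤ f q generalizing p q
  · exact this q hq p hp hd.symm (Ne.symm hpq) (le_of_not_ge hf)
  obtain ⟨x', b', y', h', hlt⟩ := h.exists_fractional_ssubset hpq hd hf hp hq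
  exact hlt.not_ge (hmin (j := (x', b', y')) h' hlt.le)

end IsSplitSol

section Rounding

variable {ι J : Type*} [Fintype ι] [Fintype J] {d : ι → ℝ} {f : ι → ℕ} {c : J → ℝ}
  {x b : ι → J → ℝ} {y : ι → ℝ} {K : ℕ}

lemma IsSplitSol.exists_isSlotCover {s : J → ℝ}
    (h : IsSplitSol (fun t => t / (2 * K)) d f c s x b y) (hd : ∀ i, 0 ≤ d i)
    (hc : ∀ j, 0 ≤ c j) (hf : ∀ i, 1 ≤ f i) (hK : 0 < K) (i : ι) :
    ∃ N ≤ f i, ∃ (T : Fin N → Finset J) (δ : ℝ), IsSlotCover T (x i + b i) δ ∧ δ < 1 / K ∧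
      (δ ≠ 0 → i ∈ fractional y) ∧
      ∀ φ : Fin N → J, (∀ g, φ g ∈ T g) → d i / (2 * K) ≤ ∑ g, c (φ g) := by
  have hK0 : (0 : ℝ) < 1 / K := by positivity
  by_cases hy : 1 - 1 / (K : ℝ) < y i
  · refine ⟨1, hf i, _, 1 - y i,
      (isSlotCover_of_mem_largeCone (h.large_mem i) (h.mass_le_one i)).mono
        (le_add_of_nonneg_left (h.small_nonneg i)), by linarith, fun hδ => ?_, fun φ hφ => ?_⟩
    · have hK1 : 1 / (K : ℝ) ≤ 1 := (div_le_one (by positivity)).2 (mod_cast hK)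
      simpa [fractional] using
        ⟨by linarith, (h.mass_le_one i).lt_of_ne fun hy1 => hδ (by linarith)⟩
    · simpa using hφ 0
  · have hdemand : 2 * (d i / (2 * K)) ≤ d i * (1 - y i) :=
      calc 2 * (d i / (2 * K)) = d i * (1 / K) := by field_simp
        _ ≤ d i * (1 - y i) := mul_le_mul_of_nonneg_left (by linarith) (hd i)
    obtain ⟨N, hN, T, hT, hφ⟩ := exists_isSlotCover_of_mem_smallCone hc
      (div_nonneg (hd i) (by positivity)) (h.small_mem i) (by linarith [h.mass_nonneg i]) hdemand
    exact ⟨N, hN, T, 0, hT.mono (le_add_of_nonneg_right (h.large_nonneg i)), hK0,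
      fun hδ => absurd rfl hδ, hφ⟩

lemma sum_lt_one_of_card_ne_zero_le {δ : ι → ℝ} (hδ : ∀ i, δ i < 1 / K)
    (hcard : #{i | δ i ≠ 0} ≤ K) : ∑ i, δ i < 1 := by
  rw [← sum_filter_ne_zero]
  rcases ({i | δ i ≠ 0} : Finset ι).eq_empty_or_nonempty with hempty | hne
  · simp [hempty]
  · have hK : 0 < K := hne.card_pos.trans_le hcard
    calc ∑ i with δ i ≠ 0, δ i < ∑ i with δ i ≠ 0, 1 / (K : ℝ) :=
          sum_lt_sum_of_nonempty hne fun i _ => hδ i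
      _ = #{i | δ i ≠ 0} * (1 / (K : ℝ)) := by rw [sum_const, nsmul_eq_mul]
      _ ≤ K * (1 / (K : ℝ)) := by gcongr
      _ = 1 := by field_simp

lemma IsSplitSol.exists_allocation {s : J → ℕ}
    (h : IsSplitSol (fun t => t / (2 * K)) d f c (fun j => (s j : ℝ)) x b y)
    (hd : ∀ i, 0 ≤ d i) (hc : ∀ j, 0 ≤ c j) (hf : ∀ i, 1 ≤ f i) (hK : 0 < K)
    (hdK : #(univ.image d) ≤ K) :
    ∃ a : ι → J → ℕ, (∀ j, ∑ i, a i j ≤ s j) ∧ (∀ i, ∑ j, a i j ≤ f i) ∧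
      ∀ i, d i / (2 * K) ≤ ∑ j, (a i j : ℝ) * c j := by
  classical
  obtain ⟨x, b, y, h, hinj⟩ := h.exists_injOn_fractional
  choose N hN T δ hT hδK hδy hcap using h.exists_isSlotCover hd hc hf hK
  have hcard : #{i | δ i ≠ 0} ≤ K :=
    calc #{i | δ i ≠ 0} ≤ #(fractional y) :=
          card_le_card fun i hi => hδy i (mem_filter.1 hi).2
      _ = #((fractional y).image d) := (card_image_of_injOn hinj).symm
      _ ≤ #(univ.image d) := card_le_card (image_subset_image (subset_univ _))
      _ ≤ K := hdK
  obtain ⟨φ, hφT, hφs⟩ := exists_slot_assignment hT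
    (fun j => by simpa using h.supply j) (sum_lt_one_of_card_ne_zero_le hδK hcard)
  refine ⟨fun i j => #{g | φ i g = j}, hφs, fun i => ?_,
    fun i => (hcap i (φ i) (hφT i)).trans_eq ?_⟩
  · rw [← card_eq_sum_card_fiberwise fun g _ => mem_univ (φ i g)]
    simpa using hN i
  · rw [← sum_fiberwise' univ (φ i) c]
    simp

end Rounding

namespace ConfigSol

variable {m n : ℕ} {D : Fin m → ℝ} {f : Fin m → ℕ} {c s : Fin n → ℝ}

lemma exists_isSplitSol (h : ConfigSol m n D f c s) (τ : ℝ → ℝ) {d : Fin m → ℝ} (hd : d ≤ D) :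
    ∃ x b y, IsSplitSol τ d f c s x b y := by
  obtain ⟨𝒮, z, hz, -, hconf, hz1, hsupply⟩ := h
  choose! x b y hx hb hxb using fun i S (hS : 0 < z i S) =>
    exists_cone_split_of_configuration c (τ (d i)) (hconf i S hS).1 ((hd i).trans (hconf i S hS).2)
  have weighted_mem {C : PointedCone ℝ ((Fin n → ℝ) × ℝ)} {i S v} (hv : 0 < z i S → v ∈ C) :
      z i S • v ∈ C := by
    rcases (hz i S).eq_or_lt with h0 | hpos
    · simp [← h0]
    · exact C.smul_mem hpos.le (hv hpos)
  refine ⟨fun i => ∑ S ∈ 𝒮, z i S • x i S, fun i => ∑ S ∈ 𝒮, z i S • b i S,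
    fun i => ∑ S ∈ 𝒮, z i S * y i S, fun i => ?_, fun i => ?_, ?_⟩
  · convert sum_mem fun S (_ : S ∈ 𝒮) => weighted_mem (hx i S) using 1
    simp [Prod.ext_iff, Prod.fst_sum, Prod.snd_sum, mul_sub, hz1]
  · convert sum_mem fun S (_ : S ∈ 𝒮) => weighted_mem (hb i S) using 1
    simp [Prod.ext_iff, Prod.fst_sum, Prod.snd_sum]
  · refine fun j => le_trans ?_ (hsupply j)
    simp only [← sum_add_distrib, ← smul_add, Finset.sum_apply, Pi.smul_apply, smul_eq_mul]
    refine sum_le_sum fun i _ => sum_le_sum fun S _ => ?_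
    rcases (hz i S).eq_or_lt with h0 | hpos
    · simp [← h0]
    · exact mul_le_mul_of_nonneg_left (hxb i S hpos j) hpos.le

lemma one_le_card_bound (h : ConfigSol m n D f c s) {i : Fin m} (hD : 0 < D i) : 1 ≤ f i := by
  obtain ⟨𝒮, z, hz, -, hconf, hz1, -⟩ := h
  obtain ⟨S, -, hS⟩ : ∃ S ∈ 𝒮, z i S ≠ 0 := exists_ne_zero_of_sum_ne_zero (by simp [hz1 i])
  obtain ⟨hcard, hdemand⟩ := hconf i S ((hz i S).lt_of_ne' hS)
  by_contra! hf
  have hS0 : ∀ j, S j = 0 := by simpa [Nat.lt_one_iff.1 hf] using hcard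
  simp only [hS0, Nat.cast_zero, zero_mul, sum_const_zero] at hdemand
  exact hD.not_ge hdemand

end ConfigSol

section DyadicFloor

/-- The largest power of two (with integer exponent) that is at most `t`, used to group demands into
classes. Its value for `t ≤ 0` is `1`. -/
noncomputable def dyadicFloor (t : ℝ) : ℝ := 2 ^ Int.log 2 t

variable {t lo hi : ℝ}

lemma dyadicFloor_pos (t : ℝ) : 0 < dyadicFloor t := by
  unfold dyadicFloor
  positivity

lemma dyadicFloor_le (ht : 0 < t) : dyadicFloor t ≤ t :=
  mod_cast Int.zpow_log_le_self one_lt_two ht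

lemma lt_two_mul_dyadicFloor (t : ℝ) : t < 2 * dyadicFloor t := by
  have h := Int.lt_zpow_succ_log_self one_lt_two t
  rw [zpow_add_one₀ (by norm_num), mul_comm] at h
  exact_mod_cast h

lemma log_dyadicFloor (t : ℝ) : Real.log (dyadicFloor t) = Int.log 2 t * Real.log 2 :=
  Real.log_zpow 2 _

lemma intLog_sub_intLog_add_one_le (hlo : 0 < lo) (hle : lo ≤ hi) :
    (Int.log 2 hi - Int.log 2 lo + 1 : ℝ) ≤ 2 * (1 + Real.log (hi / lo)) := by
  have hhi : 0 < hi := hlo.trans_le hle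
  have hup : Int.log 2 hi * Real.log 2 ≤ Real.log hi := by
    rw [← log_dyadicFloor]
    exact Real.log_le_log (dyadicFloor_pos hi) (dyadicFloor_le hhi)
  have hdown : Real.log lo ≤ Real.log 2 + Int.log 2 lo * Real.log 2 := by
    rw [← log_dyadicFloor, ← Real.log_mul two_ne_zero (dyadicFloor_pos lo).ne']
    exact Real.log_le_log hlo (lt_two_mul_dyadicFloor lo).le
  have hlog : 0 ≤ Real.log (hi / lo) := Real.log_nonneg ((one_le_div hlo).2 hle)
  have hratio : (Int.log 2 hi - Int.log 2 lo - 1) * Real.log 2 ≤ Real.log (hi / lo) := by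
    rw [Real.log_div hhi.ne' hlo.ne']
    linarith
  nlinarith [Real.log_two_gt_d9]

lemma card_image_dyadicFloor_le {ι : Type*} [Fintype ι] [Nonempty ι] {D : ι → ℝ} (hlo : 0 < lo)
    (hD : ∀ i, D i ∈ Set.Icc lo hi) :
    (#(univ.image (dyadicFloor ∘ D)) : ℝ) ≤ 2 * (1 + Real.log (hi / lo)) := by
  have hle : lo ≤ hi := (hD (Classical.arbitrary ι)).1.trans (hD (Classical.arbitrary ι)).2
  have hmono : Int.log 2 lo ≤ Int.log 2 hi := Int.log_mono_right hlo hle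
  have hsub : univ.image (dyadicFloor ∘ D) ⊆
      (Icc (Int.log 2 lo) (Int.log 2 hi)).image fun k => (2 : ℝ) ^ k := by
    refine image_subset_iff.2 fun i _ => mem_image.2 ⟨Int.log 2 (D i), mem_Icc.2 ⟨?_, ?_⟩, rfl⟩
    · exact Int.log_mono_right hlo (hD i).1
    · exact Int.log_mono_right (hlo.trans_le (hD i).1) (hD i).2
  have hcard := (card_le_card hsub).trans card_image_le
  rw [Int.card_Icc] at hcard
  calc (#(univ.image (dyadicFloor ∘ D)) : ℝ) ≤ (Int.log 2 hi - Int.log 2 lo + 1 : ℤ) := by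
        exact_mod_cast (by omega : (#(univ.image (dyadicFloor ∘ D)) : ℤ) ≤ _)
    _ ≤ 2 * (1 + Real.log (hi / lo)) := mod_cast intLog_sub_intLog_add_one_le hlo hle

end DyadicFloor

/-- The configuration LP is an `O(log D)`-approximate supply polyhedron for CCKP (where
`D = D_max / D_min`): there is an absolute constant `A > 0` such that any integer supply
vector admitting a fractional configuration solution also admits an integral allocation,
respecting the supplies and the cardinality bounds, that gives every machine `i` total
capacity at least `D_i / (A·(1 + ln(D_max/D_min)))`. -/
theorem configLP_log_approximate_supply :
    ∃ A : ℝ, 0 < A ∧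
      ∀ (m n : ℕ) (D : Fin m → ℝ) (f : Fin m → ℕ) (c : Fin n → ℝ)
        (s : Fin n → ℕ) (Dmax Dmin : ℝ),
        (∀ i, 0 < D i) → (∀ j, 0 < c j) →
        IsGreatest (Set.range D) Dmax → IsLeast (Set.range D) Dmin →
        ConfigSol m n D f c (fun j => (s j : ℝ)) →
        ∃ nn : Fin m → Fin n → ℕ,
          (∀ j, ∑ i, nn i j ≤ s j) ∧
          (∀ i, ∑ j, nn i j ≤ f i) ∧
          (∀ i, D i / (A * (1 + Real.log (Dmax / Dmin))) ≤
            ∑ j, (nn i j : ℝ) * c j) := by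
  refine ⟨8, by norm_num, fun m n D f c s Dmax Dmin hD hc hmax hmin hsol => ?_⟩
  obtain ⟨i₀, hi₀⟩ := hmin.1
  have : Nonempty (Fin m) := ⟨i₀⟩
  have hDmem (i : Fin m) : D i ∈ Set.Icc Dmin Dmax := ⟨hmin.2 ⟨i, rfl⟩, hmax.2 ⟨i, rfl⟩⟩
  set d := dyadicFloor ∘ D
  set K := #(univ.image d)
  have hK : 0 < K := (univ_nonempty.image d).card_pos
  have hKlog : (K : ℝ) ≤ 2 * (1 + Real.log (Dmax / Dmin)) :=
    card_image_dyadicFloor_le (hi₀ ▸ hD i₀) hDmem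
  obtain ⟨x, b, y, h⟩ :=
    hsol.exists_isSplitSol (fun t => t / (2 * K)) fun i => dyadicFloor_le (hD i)
  obtain ⟨a, has, haf, had⟩ := h.exists_allocation (fun i => (dyadicFloor_pos (D i)).le)
    (fun j => (hc j).le) (fun i => hsol.one_le_card_bound (hD i)) hK le_rfl
  refine ⟨a, has, haf, fun i => ?_⟩
  calc D i / (8 * (1 + Real.log (Dmax / Dmin))) ≤ D i / (4 * K) :=
        div_le_div_of_nonneg_left (hD i).le (by positivity) (by linarith)
    _ ≤ 2 * d i / (4 * K) := by gcongr; exact (lt_two_mul_dyadicFloor (D i)).le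
    _ = d i / (2 * K) := by ring
    _ ≤ ∑ j, (a i j : ℝ) * c j := had i
end

section
/- Assign to each edge {i,j} of the Petersen graph (on vertex set {0,…,9}) the weight 2^i + 2^j. Then for every partition of the edge set of the Petersen graph into three sets E_1, E_2, E_3, there is some t ∈ {1,2,3} with Σ_{{i,j} ∈ E_t} (2^i + 2^j) ≤ 1022. -/
open Finset

/-- The edge set of the Petersen graph on vertex set `Fin 10`: the outer 5-cycle on
`{0,…,4}`, the spokes `{i, i+5}`, and the inner 5-cycle `{5+i, 5+((i+2) mod 5)}`. -/
def petersenEdges : Finset (Sym2 (Fin 10)) :=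
  { s(0, 1), s(1, 2), s(2, 3), s(3, 4), s(4, 0),
    s(0, 5), s(1, 6), s(2, 7), s(3, 8), s(4, 9),
    s(5, 7), s(6, 8), s(7, 9), s(8, 5), s(9, 6) }

/-- The weight of an edge `{i, j}` is `2^i + 2^j`. -/
def edgeWeight : Sym2 (Fin 10) → ℕ :=
  Sym2.lift ⟨fun a b => 2 ^ (a : ℕ) + 2 ^ (b : ℕ), fun a b => add_comm _ _⟩

/-!
If every part weighs at least `1023 = ∑ v, 2 ^ v`, then every part weighs exactly `1023`, because
the Petersen graph is `3`-regular. Reading the weights in base two from the lowest digit upwards,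
each vertex has positive degree in each part, hence degree one in each part, so the parts are
perfect matchings. A perfect matching with `k` outer edges contains `5 - 2 * k` spokes, and `k = 1`
is impossible: the two outer vertices without a spoke of the matching would be adjacent, and so
would their inner neighbours, yielding a cycle of length four. Hence every perfect matching contains
one or five spokes, and three of them contain `3` modulo `4` spokes in total, whereas there are `5`.
-/

section Digits

variable {ι : Type*} [Fintype ι]

theorem eq_one_of_sum_pow_mul_eq {b : ℕ} (hb : 1 < b) :
    ∀ {n : ℕ} {d : ι → Fin n → ℕ}, (∀ v, ∑ t, d t v ≤ Fintype.card ι) →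
      (∀ t, ∑ v : Fin n, b ^ (v : ℕ) * d t v = ∑ v : Fin n, b ^ (v : ℕ)) → ∀ t v, d t v = 1
  | 0, _, _, _ => fun _ v => v.elim0
  | n + 1, d, hcol, hrow => by
    have hsplit (t : ι) : d t 0 + b * ∑ v : Fin n, b ^ (v : ℕ) * d t v.succ =
        1 + b * ∑ v : Fin n, b ^ (v : ℕ) := by
      simpa [Fin.sum_univ_succ, pow_succ', mul_sum, mul_assoc] using hrow t
    have hpos : ∀ t ∈ univ, 1 ≤ d t 0 := by
      refine fun t _ => Nat.one_le_iff_ne_zero.2 fun hzero => ?_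
      have hdvd : b ∣ 1 := (Nat.dvd_add_left (dvd_mul_right b _)).1
        ⟨_, by rw [← hsplit t, hzero, zero_add]⟩
      exact hb.ne' (Nat.dvd_one.1 hdvd)
    have hlow (t : ι) : d t 0 = 1 := by
      refine ((sum_eq_sum_iff_of_le hpos).1 ((sum_le_sum hpos).antisymm ?_) t (mem_univ t)).symm
      simpa using hcol 0
    have hhigh := eq_one_of_sum_pow_mul_eq hb (d := fun t v => d t v.succ) (fun v => hcol v.succ)
      fun t => Nat.eq_of_mul_eq_mul_left (Nat.zero_lt_of_lt hb)
        (Nat.add_left_cancel (hlow t ▸ hsplit t))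
    exact fun t => Fin.cases (hlow t) (hhigh t)

theorem eq_one_of_sum_pow_le_sum_pow_mul {b n : ℕ} (hb : 1 < b) {d : ι → Fin n → ℕ}
    (hcol : ∀ v, ∑ t, d t v ≤ Fintype.card ι)
    (hrow : ∀ t, ∑ v : Fin n, b ^ (v : ℕ) ≤ ∑ v : Fin n, b ^ (v : ℕ) * d t v) (t : ι) (v : Fin n) :
    d t v = 1 := by
  have htotal : ∑ t, ∑ v : Fin n, b ^ (v : ℕ) * d t v ≤ ∑ _t : ι, ∑ v : Fin n, b ^ (v : ℕ) :=
    calc ∑ t, ∑ v : Fin n, b ^ (v : ℕ) * d t v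
        = ∑ v : Fin n, b ^ (v : ℕ) * ∑ t, d t v := by rw [sum_comm]; simp only [mul_sum]
      _ ≤ ∑ v : Fin n, b ^ (v : ℕ) * Fintype.card ι := by gcongr with v; exact hcol v
      _ = ∑ _t : ι, ∑ v : Fin n, b ^ (v : ℕ) := by
        rw [sum_const, card_univ, smul_eq_mul, ← sum_mul, mul_comm]
  have hrow_le : ∀ t ∈ univ, ∑ v : Fin n, b ^ (v : ℕ) ≤ ∑ v : Fin n, b ^ (v : ℕ) * d t v :=
    fun t _ => hrow t
  have hrow_eq := (sum_eq_sum_iff_of_le hrow_le).1 ((sum_le_sum hrow_le).antisymm htotal)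
  exact eq_one_of_sum_pow_mul_eq hb hcol (fun t => (hrow_eq t (mem_univ t)).symm) t v

end Digits

section Counting

variable {α : Type*} [DecidableEq α]

theorem card_filter_biUnion_univ {ι : Type*} [Fintype ι] {E : ι → Finset α}
    (hE : Pairwise fun t u => Disjoint (E t) (E u)) (p : α → Prop) [DecidablePred p] :
    #{e ∈ univ.biUnion E | p e} = ∑ t, #{e ∈ E t | p e} := by
  rw [filter_biUnion, card_biUnion fun t _ u _ htu => disjoint_filter_filter (hE htu)]

theorem card_filter_eq_sum_ite_of_subset {M S : Finset α} (hMS : M ⊆ S) (p : α → Prop)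
    [DecidablePred p] : #{e ∈ M | p e} = ∑ e ∈ S with p e, if e ∈ M then 1 else 0 := by
  rw [← card_filter, filter_comm, filter_mem_eq_inter, inter_eq_right.2 hMS]

end Counting

theorem sum_add_two_mul_sum_eq_card {G : Type*} [AddGroup G] [Fintype G] {a : G} {o s : G → ℕ}
    (ho : ∀ i, o i + o (i - a) + s i = 1) : ∑ i, s i + 2 * ∑ i, o i = Fintype.card G := by
  have hshift : ∑ i, o (i - a) = ∑ i, o i := Equiv.sum_comp (Equiv.subRight a) o
  have htotal : ∑ i, (o i + o (i - a) + s i) = Fintype.card G := by simp [ho]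
  rw [sum_add_distrib, sum_add_distrib, hshift] at htotal
  omega

section CycleEquations

-- In the application, `o i`, `n i` and `s i` are the multiplicities in a perfect matching of the
-- outer edge `{i, i + 1}`, the inner edge `{5 + i, 5 + (i + 2)}` and the spoke `{i, 5 + i}`.
variable {o n s : Fin 5 → ℕ}

theorem sum_ne_one_of_cycle_equations (ho : ∀ i, o i + o (i - 1) + s i = 1)
    (hn : ∀ i, n i + n (i - 2) + s i = 1) : ∑ i, o i ≠ 1 := by
  intro hsum
  obtain ⟨j, -, hj⟩ : ∃ j ∈ univ, o j ≠ 0 := exists_ne_zero_of_sum_ne_zero (by omega)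
  have houter (i : Fin 5) (hi : i ≠ j) : o i = 0 := by
    have := add_le_sum (f := o) (fun _ _ => Nat.zero_le _) (mem_univ i) (mem_univ j) hi
    omega
  have hspoke (i : Fin 5) (hi : i ≠ j) (hi' : i - 1 ≠ j) : s i = 1 := by
    simpa [houter i hi, houter (i - 1) hi'] using ho i
  have hne : ∀ j : Fin 5, (j + 2 ≠ j ∧ j + 2 - 1 ≠ j) ∧ j - 2 ≠ j ∧ j - 2 - 1 ≠ j := by decide
  -- `s (j + 2) = s (j - 2) = 1` forces `n j = n (j - 2) = 0`, while `o j = 1` forces `s j = 0`.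
  have hright := hspoke (j + 2) (hne j).1.1 (hne j).1.2
  have hleft := hspoke (j - 2) (hne j).2.1 (hne j).2.2
  have hinner_right := hn (j + 2)
  rw [add_sub_cancel_right] at hinner_right
  have hinner_left := hn (j - 2)
  have houter_j := ho j
  have hinner_j := hn j
  omega

theorem sum_mod_four_eq_one_of_cycle_equations (ho : ∀ i, o i + o (i - 1) + s i = 1)
    (hn : ∀ i, n i + n (i - 2) + s i = 1) : (∑ i, s i) % 4 = 1 := by
  have hsum := sum_add_two_mul_sum_eq_card ho
  rw [Fintype.card_fin] at hsum
  have hne := sum_ne_one_of_cycle_equations ho hn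
  omega

end CycleEquations

/-- A set `M` of edges is a perfect matching if every vertex lies on exactly one edge of `M`.
Edge sets are finsets of unordered pairs, as in `petersenEdges`. -/
def IsPerfectMatching {V : Type*} [DecidableEq V] (M : Finset (Sym2 V)) : Prop :=
  ∀ v, #{e ∈ M | v ∈ e} = 1

theorem edgeWeight_eq_sum_toFinset {e : Sym2 (Fin 10)} (he : ¬e.IsDiag) :
    edgeWeight e = ∑ v ∈ e.toFinset, 2 ^ (v : ℕ) := by
  induction e with
  | h a b => rw [Sym2.toFinset_mk_eq, sum_pair (mt Sym2.mk_isDiag_iff.2 he)]; rfl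

theorem sum_edgeWeight {M : Finset (Sym2 (Fin 10))} (hM : ∀ e ∈ M, ¬e.IsDiag) :
    ∑ e ∈ M, edgeWeight e = ∑ v : Fin 10, 2 ^ (v : ℕ) * #{e ∈ M | v ∈ e} :=
  calc ∑ e ∈ M, edgeWeight e
      = ∑ e ∈ M, ∑ v ∈ e.toFinset, 2 ^ (v : ℕ) :=
        sum_congr rfl fun e he => edgeWeight_eq_sum_toFinset (hM e he)
    _ = ∑ v : Fin 10, ∑ e ∈ M with v ∈ e, 2 ^ (v : ℕ) := sum_comm' (by simp)
    _ = ∑ v : Fin 10, 2 ^ (v : ℕ) * #{e ∈ M | v ∈ e} := by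
        simp only [sum_const, smul_eq_mul, mul_comm]

theorem isPerfectMatching_of_le_sum_edgeWeight {ι : Type*} [Fintype ι]
    {E : ι → Finset (Sym2 (Fin 10))} (hloop : ∀ t, ∀ e ∈ E t, ¬e.IsDiag)
    (hdeg : ∀ v, ∑ t, #{e ∈ E t | v ∈ e} ≤ Fintype.card ι)
    (hweight : ∀ t, 1023 ≤ ∑ e ∈ E t, edgeWeight e) (t : ι) : IsPerfectMatching (E t) :=
  eq_one_of_sum_pow_le_sum_pow_mul one_lt_two hdeg (fun t => sum_edgeWeight (hloop t) ▸ hweight t) t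

theorem not_isDiag_of_mem_petersenEdges : ∀ e ∈ petersenEdges, ¬e.IsDiag := by
  decide

theorem card_petersenEdges_filter_mem : ∀ v, #{e ∈ petersenEdges | v ∈ e} = 3 := by
  decide

/-- The edge `{i, i + 1}` of the outer cycle; the index `i` is taken modulo `5`. -/
def outerEdge (i : Fin 5) : Sym2 (Fin 10) := s(i.castAdd 5, (i + 1).castAdd 5)

/-- The spoke `{i, 5 + i}`, joining the outer cycle to the inner one. -/
def spoke (i : Fin 5) : Sym2 (Fin 10) := s(i.castAdd 5, i.natAdd 5)

/-- The edge `{5 + i, 5 + (i + 2)}` of the inner cycle; the indices `i` and `i + 2` are taken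
modulo `5`. -/
def innerEdge (i : Fin 5) : Sym2 (Fin 10) := s(i.natAdd 5, (i + 2).natAdd 5)

theorem petersenEdges_filter_castAdd_mem : ∀ i : Fin 5,
    {e ∈ petersenEdges | i.castAdd 5 ∈ e} = {outerEdge i, outerEdge (i - 1), spoke i} := by
  decide

theorem petersenEdges_filter_natAdd_mem : ∀ i : Fin 5,
    {e ∈ petersenEdges | i.natAdd 5 ∈ e} = {innerEdge i, innerEdge (i - 2), spoke i} := by
  decide

theorem petersenEdges_filter_spoke :
    {e ∈ petersenEdges | e ∈ univ.image spoke} = univ.image spoke := by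
  decide

section PerfectMatching

variable {M : Finset (Sym2 (Fin 10))}

theorem IsPerfectMatching.outerEdge_add_outerEdge_add_spoke (hM : IsPerfectMatching M)
    (hsub : M ⊆ petersenEdges) (i : Fin 5) :
    (if outerEdge i ∈ M then 1 else 0) + (if outerEdge (i - 1) ∈ M then 1 else 0) +
      (if spoke i ∈ M then 1 else 0) = 1 := by
  have hne : outerEdge i ∉ ({outerEdge (i - 1), spoke i} : Finset _) ∧
      outerEdge (i - 1) ∉ ({spoke i} : Finset _) := by
    revert i; decide
  have hdeg := hM (i.castAdd 5)
  rwa [card_filter_eq_sum_ite_of_subset hsub, petersenEdges_filter_castAdd_mem, sum_insert hne.1,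
    sum_insert hne.2, sum_singleton, ← add_assoc] at hdeg

theorem IsPerfectMatching.innerEdge_add_innerEdge_add_spoke (hM : IsPerfectMatching M)
    (hsub : M ⊆ petersenEdges) (i : Fin 5) :
    (if innerEdge i ∈ M then 1 else 0) + (if innerEdge (i - 2) ∈ M then 1 else 0) +
      (if spoke i ∈ M then 1 else 0) = 1 := by
  have hne : innerEdge i ∉ ({innerEdge (i - 2), spoke i} : Finset _) ∧
      innerEdge (i - 2) ∉ ({spoke i} : Finset _) := by
    revert i; decide
  have hdeg := hM (i.natAdd 5)
  rwa [card_filter_eq_sum_ite_of_subset hsub, petersenEdges_filter_natAdd_mem, sum_insert hne.1,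
    sum_insert hne.2, sum_singleton, ← add_assoc] at hdeg

theorem IsPerfectMatching.card_filter_spoke_mod_four (hM : IsPerfectMatching M)
    (hsub : M ⊆ petersenEdges) :
    #{e ∈ M | e ∈ univ.image spoke} % 4 = 1 := by
  have hinj : Function.Injective spoke := by decide
  rw [card_filter_eq_sum_ite_of_subset hsub, petersenEdges_filter_spoke, sum_image hinj.injOn]
  exact sum_mod_four_eq_one_of_cycle_equations (hM.outerEdge_add_outerEdge_add_spoke hsub)
    (hM.innerEdge_add_innerEdge_add_spoke hsub)

end PerfectMatching

theorem exists_not_isPerfectMatching_of_biUnion_eq_petersenEdges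
    {E : Fin 3 → Finset (Sym2 (Fin 10))} (hdisj : Pairwise fun t u => Disjoint (E t) (E u))
    (hunion : univ.biUnion E = petersenEdges) : ∃ t, ¬IsPerfectMatching (E t) := by
  by_contra! hmatch
  have hmod (t : Fin 3) : #{e ∈ E t | e ∈ univ.image spoke} % 4 = 1 :=
    (hmatch t).card_filter_spoke_mod_four (hunion ▸ subset_biUnion_of_mem E (mem_univ t))
  have hcard : #{e ∈ petersenEdges | e ∈ univ.image spoke} = 5 := by decide
  rw [← hunion, card_filter_biUnion_univ hdisj, Fin.sum_univ_three] at hcard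
  have := hmod 0
  have := hmod 1
  have := hmod 2
  omega

/-- For every partition of the edge set of the Petersen graph into three sets, some part
has total weight at most `1022` (where edge `{i,j}` weighs `2^i + 2^j`). -/
theorem petersen_three_partition_light_part
    (E : Fin 3 → Finset (Sym2 (Fin 10)))
    (hdisj : ∀ t₁ t₂, t₁ ≠ t₂ → Disjoint (E t₁) (E t₂))
    (hunion : Finset.univ.biUnion E = petersenEdges) :
    ∃ t : Fin 3, ∑ e ∈ E t, edgeWeight e ≤ 1022 := by
  by_contra! hheavy
  have hloop (t : Fin 3) : ∀ e ∈ E t, ¬e.IsDiag := fun e he =>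
    not_isDiag_of_mem_petersenEdges e (hunion ▸ mem_biUnion.2 ⟨t, mem_univ t, he⟩)
  have hdeg (v : Fin 10) : ∑ t, #{e ∈ E t | v ∈ e} = 3 := by
    rw [← card_filter_biUnion_univ hdisj, hunion, card_petersenEdges_filter_mem]
  obtain ⟨t, ht⟩ := exists_not_isPerfectMatching_of_biUnion_eq_petersenEdges hdisj hunion
  exact ht (isPerfectMatching_of_le_sum_edgeWeight hloop (fun v => (hdeg v).le) hheavy t)
end

section
/- Fix an integer K ≥ 2. Consider the following restricted-assignment max-min instance. Machines: 'large' machines M_1,…,M_K each with demand K, and 'small' machines m^{(i)}_k for i,k ∈ {1,…,K} each with demand 1. Jobs: K−1 'big' jobs each of capacity K, each of which may only be assigned to a large machine; for each i ∈ {1,…,K}, one 'public' job j^{(i)}_0 of capacity 1 which may only be assigned to one of m^{(i)}_1,…,m^{(i)}_K; and for each i,k ∈ {1,…,K}, one 'private' job j^{(i)}_k of capacity 1 which may only be assigned to m^{(i)}_k or to M_i. Then for every assignment of each job to one of its allowed machines, some machine receives total capacity at most 1/K times its demand; that is, either some large machine receives total capacity at most 1, or some small machine receives no job at all. -/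
open Finset

/-!
There are fewer big jobs than large machines, so some large machine `M_i` gets no big job. If its
load still exceeds `1`, then at least two of the private jobs of class `i` went to `M_i`; the single
public job of that class can replace only one of them, so the small machine of another one gets
nothing.
-/

theorem exists_forall_apply_ne_of_card_lt {α β : Type*} [Fintype α] [Fintype β]
    (h : Fintype.card α < Fintype.card β) (f : α → β) : ∃ y, ∀ x, f x ≠ y := by
  by_contra! hf
  exact h.not_ge (Fintype.card_le_of_surjective f hf)

theorem card_filter_le_one_or_exists_ne {α : Type*} [Fintype α] (p : α → Prop) [DecidablePred p]
    (a : α) : #{x | p x} ≤ 1 ∨ ∃ x, p x ∧ a ≠ x := by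
  by_contra! ⟨hcard, hp⟩
  obtain ⟨x, hx, hxa⟩ := exists_mem_ne hcard a
  exact hxa (hp x ((mem_filter_univ x).1 hx)).symm

theorem bansal_sviridenko_gap_general {ι β : Type*} {κ : ι → Type*} [Fintype ι] [DecidableEq ι]
    [Fintype β] [∀ i, Fintype (κ i)] (hcard : Fintype.card β < Fintype.card ι) (capacity : β → ℕ)
    (Abig : β → ι) (Apub : ∀ i, κ i) (Apriv : ∀ i, κ i → Bool) :
    (∃ i, ∑ b with Abig b = i, capacity b + #{k | Apriv i k = false} ≤ 1) ∨
    (∃ i k, Apriv i k = false ∧ Apub i ≠ k) := by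
  obtain ⟨i, hbig⟩ := exists_forall_apply_ne_of_card_lt hcard Abig
  obtain hpriv | hstarved :=
    card_filter_le_one_or_exists_ne (fun k ↦ Apriv i k = false) (Apub i)
  · have hbigload : ∑ b with Abig b = i, capacity b = 0 := by
      rw [filter_false_of_mem fun b _ ↦ hbig b, sum_empty]
    exact .inl ⟨i, by rwa [hbigload, zero_add]⟩
  · exact .inr ⟨i, hstarved⟩

/-- The Bansal–Sviridenko integrality-gap instance for restricted-assignment max-min
allocation, with parameter `K ≥ 2`. There are `K` large machines `M_1, …, M_K` of demand
`K` and `K·K` small machines `m⁽ⁱ⁾ₖ` of demand `1`; there are `K−1` big jobs of capacity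
`K` (assignable only to large machines, via `Abig`), one public job `j⁽ⁱ⁾₀` of capacity `1`
per class `i` (assignable only to the small machines of class `i`, via `Apub`), and one
private job `j⁽ⁱ⁾ₖ` of capacity `1` per pair `(i,k)` (assignable only to `m⁽ⁱ⁾ₖ` or to
`M_i`; `Apriv i k = true` means it goes to the small machine `m⁽ⁱ⁾ₖ`, and
`Apriv i k = false` means it goes to the large machine `M_i`). For every such assignment,
either some large machine receives total capacity at most `1` (i.e. `1/K` of its demand),
or some small machine receives no job at all. -/
theorem bansal_sviridenko_gap (K : ℕ) (hK : 2 ≤ K)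
    (Abig : Fin (K - 1) → Fin K)
    (Apub : Fin K → Fin K)
    (Apriv : Fin K → Fin K → Bool) :
    (∃ i : Fin K,
      K * (Finset.univ.filter (fun b => Abig b = i)).card
        + (Finset.univ.filter (fun k => Apriv i k = false)).card ≤ 1) ∨
    (∃ i k : Fin K, Apriv i k = false ∧ Apub i ≠ k) := by
  have hcard : Fintype.card (Fin (K - 1)) < Fintype.card (Fin K) := by
    simp only [Fintype.card_fin]
    omega
  simpa [mul_comm] using bansal_sviridenko_gap_general hcard (fun _ ↦ K) Abig Apub Apriv
end

section
/- Let S be a finite set of jobs with capacities c : S → ℝ_{>0}, let D > 0, let f be a positive integer, and let ε_1, ε_2 ≥ 0. Suppose |S| ≤ (1+ε_2)·f and Σ_{j∈S} c(j) ≥ (1−ε_1)·D. Then there exists a subset S' ⊆ S with |S'| ≤ f and Σ_{j∈S'} c(j) ≥ (1 − 2ε_1 − ε_2)·D. -/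
open Finset

/-!
Keep the `k` jobs of largest capacity. Each kept job dominates each discarded one; summing this over
all such pairs shows that the average over the kept jobs is at least the average over all jobs, so
for nonnegative capacities pruning costs at most the factor `|S| / k ≤ 1 + ε₂`. Jobs of negative
capacity can be discarded beforehand, which only raises the total. Finally
`(1 + ε₂) * (1 - ε₁ - ε₂) ≤ 1 - ε₁`.
-/

section

variable {α : Type*}

theorem exists_subset_card_eq_forall_notMem_le {β : Type*} [LinearOrder β] {S : Finset α}
    (c : α → β) {k : ℕ} (hk : k ≤ #S) :
    ∃ T ⊆ S, #T = k ∧ ∀ i ∈ T, ∀ j ∈ S, j ∉ T → c j ≤ c i := by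
  classical
  induction k with
  | zero => exact ⟨∅, empty_subset S, card_empty, by simp⟩
  | succ k ih =>
    obtain ⟨T, hTS, rfl, htop⟩ := ih (Nat.le_of_succ_le hk)
    obtain ⟨m, hm, hmax⟩ := (S \ T).exists_max_image c
      (sdiff_nonempty_of_card_lt_card (Nat.lt_of_succ_le hk))
    obtain ⟨hmS, hmT⟩ := mem_sdiff.1 hm
    refine ⟨insert m T, insert_subset hmS hTS, card_insert_of_notMem hmT, ?_⟩
    intro i hi j hjS hj
    obtain ⟨-, hjT⟩ := not_or.1 (mt mem_insert.2 hj)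
    rcases mem_insert.1 hi with rfl | hiT
    · exact hmax j (mem_sdiff.2 ⟨hjS, hjT⟩)
    · exact htop i hiT j hjS hjT

theorem exists_subset_card_eq_nsmul_sum_le {M : Type*} [AddCommMonoid M] [LinearOrder M]
    [IsOrderedAddMonoid M] {S : Finset α} (c : α → M) {k : ℕ} (hk : k ≤ #S) :
    ∃ T ⊆ S, #T = k ∧ k • ∑ j ∈ S, c j ≤ #S • ∑ j ∈ T, c j := by
  classical
  obtain ⟨T, hTS, rfl, htop⟩ := exists_subset_card_eq_forall_notMem_le c hk
  refine ⟨T, hTS, rfl, ?_⟩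
  have hdiscarded : #T • ∑ j ∈ S \ T, c j ≤ #(S \ T) • ∑ i ∈ T, c i :=
    calc #T • ∑ j ∈ S \ T, c j
        = ∑ _i ∈ T, ∑ j ∈ S \ T, c j := (sum_const _).symm
      _ ≤ ∑ i ∈ T, ∑ _j ∈ S \ T, c i := sum_le_sum fun i hi ↦ sum_le_sum fun j hj ↦
          htop i hi j (mem_sdiff.1 hj).1 (mem_sdiff.1 hj).2
      _ = #(S \ T) • ∑ i ∈ T, c i := by simp only [sum_const, sum_nsmul]
  calc #T • ∑ j ∈ S, c j
      = #T • ∑ j ∈ S \ T, c j + #T • ∑ j ∈ T, c j := by rw [← nsmul_add, sum_sdiff hTS]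
    _ ≤ #(S \ T) • ∑ j ∈ T, c j + #T • ∑ j ∈ T, c j := by gcongr
    _ = #S • ∑ j ∈ T, c j := by rw [← add_nsmul, card_sdiff_add_card_eq_card hTS]

variable {R : Type*} [CommRing R] [LinearOrder R] [IsStrictOrderedRing R]
  {S : Finset α} {c : α → R} {k : ℕ} {r : R}

theorem exists_subset_card_le_sum_le_mul_of_nonneg (hc : ∀ j ∈ S, 0 ≤ c j) (hr : 1 ≤ r)
    (hS : (#S : R) ≤ r * k) :
    ∃ T ⊆ S, #T ≤ k ∧ ∑ j ∈ S, c j ≤ r * ∑ j ∈ T, c j := by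
  rcases le_or_gt #S k with hSk | hkS
  · exact ⟨S, Subset.rfl, hSk, le_mul_of_one_le_left (sum_nonneg hc) hr⟩
  obtain ⟨T, hTS, hTk, havg⟩ := exists_subset_card_eq_nsmul_sum_le c hkS.le
  refine ⟨T, hTS, hTk.le, ?_⟩
  have hk : (0 : R) < k := by
    refine pos_of_mul_pos_right ?_ (zero_le_one.trans hr)
    exact (Nat.cast_pos.2 (Nat.zero_lt_of_lt hkS)).trans_le hS
  have hT : 0 ≤ ∑ j ∈ T, c j := sum_nonneg fun j hj ↦ hc j (hTS hj)
  refine le_of_mul_le_mul_left ?_ hk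
  calc (k : R) * ∑ j ∈ S, c j
      ≤ #S * ∑ j ∈ T, c j := by simpa only [nsmul_eq_mul] using havg
    _ ≤ r * k * ∑ j ∈ T, c j := by gcongr
    _ = k * (r * ∑ j ∈ T, c j) := by ring

theorem exists_subset_card_le_sum_le_mul (c : α → R) (hr : 1 ≤ r) (hS : (#S : R) ≤ r * k) :
    ∃ T ⊆ S, #T ≤ k ∧ ∑ j ∈ S, c j ≤ r * ∑ j ∈ T, c j := by
  let P := {j ∈ S | 0 ≤ c j}
  have hPS : P ⊆ S := filter_subset _ S
  have hsum : ∑ j ∈ S, c j ≤ ∑ j ∈ P, c j := by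
    rw [← sum_filter_add_sum_filter_not S (0 ≤ c ·)]
    exact add_le_of_nonpos_right (sum_nonpos fun j hj ↦ (not_le.1 (mem_filter.1 hj).2).le)
  have hP : (#P : R) ≤ r * k := (Nat.cast_le.2 (card_le_card hPS)).trans hS
  obtain ⟨T, hTP, hTk, hT⟩ :=
    exists_subset_card_le_sum_le_mul_of_nonneg (fun j hj ↦ (mem_filter.1 hj).2) hr hP
  exact ⟨T, hTP.trans hPS, hTk, hsum.trans hT⟩

theorem prune_to_cardinality_general (S : Finset α) (c : α → R) {D : R} (hD : 0 ≤ D) (f : ℕ)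
    {ε₁ ε₂ : R} (hε₁ : 0 ≤ ε₁) (hε₂ : 0 ≤ ε₂) (hcard : (#S : R) ≤ (1 + ε₂) * f)
    (hcap : (1 - ε₁) * D ≤ ∑ j ∈ S, c j) :
    ∃ S' ⊆ S, #S' ≤ f ∧ (1 - ε₁ - ε₂) * D ≤ ∑ j ∈ S', c j := by
  obtain ⟨T, hTS, hTf, hT⟩ :=
    exists_subset_card_le_sum_le_mul c (le_add_of_nonneg_right hε₂) hcard
  refine ⟨T, hTS, hTf, ?_⟩
  have hpos : 0 < 1 + ε₂ := by positivity
  have hloss : 0 ≤ ε₂ * (ε₁ + ε₂) * D := by positivity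
  refine le_of_mul_le_mul_left ?_ hpos
  calc (1 + ε₂) * ((1 - ε₁ - ε₂) * D)
      = (1 - ε₁) * D - ε₂ * (ε₁ + ε₂) * D := by ring
    _ ≤ (1 - ε₁) * D := sub_le_self _ hloss
    _ ≤ (1 + ε₂) * ∑ j ∈ T, c j := hcap.trans hT

end

/-- Pruning an approximately-cardinality-feasible allocation: if a finite job set `S` with
positive capacities has `|S| ≤ (1+ε₂)·f` and total capacity at least `(1−ε₁)·D`, then some
subset `S' ⊆ S` with `|S'| ≤ f` has total capacity at least `(1 − 2ε₁ − ε₂)·D`. -/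
theorem prune_to_cardinality {α : Type*} [DecidableEq α] (S : Finset α)
    (c : α → ℝ) (hc : ∀ j ∈ S, 0 < c j)
    (D : ℝ) (hD : 0 < D) (f : ℕ) (hf : 0 < f)
    (ε₁ ε₂ : ℝ) (hε₁ : 0 ≤ ε₁) (hε₂ : 0 ≤ ε₂)
    (hcard : (S.card : ℝ) ≤ (1 + ε₂) * f)
    (hcap : (1 - ε₁) * D ≤ ∑ j ∈ S, c j) :
    ∃ S' ⊆ S, S'.card ≤ f ∧ (1 - 2 * ε₁ - ε₂) * D ≤ ∑ j ∈ S', c j := by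
  obtain ⟨T, hTS, hTf, hT⟩ := prune_to_cardinality_general S c hD.le f hε₁ hε₂ hcard hcap
  exact ⟨T, hTS, hTf, (mul_le_mul_of_nonneg_right (by linarith) hD.le).trans hT⟩
end

section
/- Let there be m machines with demands D_1,…,D_m > 0 and cardinality bounds f_1,…,f_m ∈ ℕ_{>0}, and n job types with capacities c_1,…,c_n > 0 and supplies s_1,…,s_n ∈ ℕ. Say job type j is allowed for machine i if c_j ≥ D_i/(2 f_i). Then: (a) if there exist nonnegative integers n_{ij} with Σ_i n_{ij} ≤ s_j for all j, Σ_j n_{ij} ≤ f_i for all i, and Σ_j n_{ij} c_j ≥ D_i for all i, then there exist nonnegative integers n'_{ij} with Σ_i n'_{ij} ≤ s_j for all j, Σ_j n'_{ij} ≤ f_i for all i, n'_{ij} > 0 only if j is allowed for i, and Σ_j n'_{ij} c_j ≥ D_i/2 for all i; (b) conversely, for any ρ ≥ 1, if there exist nonnegative integers n_{ij} with Σ_i n_{ij} ≤ s_j for all j, n_{ij} > 0 only if j is allowed for i, and Σ_j n_{ij} c_j ≥ D_i/ρ for all i (with no cardinality restriction), then there exist nonnegative integers n'_{ij} with Σ_i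 n'_{ij} ≤ s_j for all j, Σ_j n'_{ij} ≤ f_i for all i, and Σ_j n'_{ij} c_j ≥ D_i/(2ρ) for all i. -/
open Finset

/-!
Write `t i = D i / (2 * f i)` for the threshold of machine `i`. At most `f i` jobs below the
threshold contribute at most `f i * t i = D i / 2`, so an allocation within the cardinality bounds
keeps at least half of each demand when its forbidden jobs are discarded. Conversely, `f i` jobs
above the threshold already contribute `D i / 2`, so a machine holding more than `f i` allowed jobs
may keep any `f i` of them.
-/

section OrderedAddCommMonoid

variable {κ M : Type*} [Fintype κ] [AddCommMonoid M]

lemma sum_nsmul_const_le_sum_nsmul [PartialOrder M] [IsOrderedAddMonoid M] (v : κ → ℕ) (c : κ → M)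
    {t : M} (hv : ∀ j, 0 < v j → t ≤ c j) : (∑ j, v j) • t ≤ ∑ j, v j • c j := by
  rw [sum_smul]
  refine sum_le_sum fun j _ => ?_
  rcases (v j).eq_zero_or_pos with hj | hj
  · simp [hj]
  · exact nsmul_le_nsmul_right (hv j hj) (v j)

variable [LinearOrder M] [IsOrderedAddMonoid M]

lemma sum_nsmul_le_sum_indicator_nsmul_add (u : κ → ℕ) (c : κ → M) {t : M} (ht : 0 ≤ t) :
    ∑ j, u j • c j ≤ ∑ j, {j | t ≤ c j}.indicator u j • c j + (∑ j, u j) • t := by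
  rw [sum_smul, ← sum_add_distrib]
  refine sum_le_sum fun j _ => ?_
  by_cases hj : t ≤ c j
  · simpa [hj] using le_add_of_nonneg_right (nsmul_nonneg ht (u j))
  · simpa [hj] using nsmul_le_nsmul_right (le_of_not_ge hj) (u j)

lemma exists_le_sum_le_min_le_sum_nsmul (u : κ → ℕ) (c : κ → M) {t : M}
    (hu : ∀ j, 0 < u j → t ≤ c j) (k : ℕ) :
    ∃ v ≤ u, ∑ j, v j ≤ k ∧ min (∑ j, u j • c j) (k • t) ≤ ∑ j, v j • c j := by
  rcases le_total (∑ j, u j) k with hk | hk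
  · exact ⟨u, le_rfl, hk, min_le_left _ _⟩
  · obtain ⟨v, hvu, hv⟩ := Finsupp.exists_le_degree_eq (Finsupp.equivFunOnFinite.symm u) k
      (by simpa [Finsupp.degree_eq_sum] using hk)
    rw [Finsupp.degree_eq_sum] at hv
    refine ⟨v, hvu, hv.le, (min_le_right _ _).trans ?_⟩
    rw [← hv]
    exact sum_nsmul_const_le_sum_nsmul v c fun j hj => hu j (hj.trans_le (hvu j))

end OrderedAddCommMonoid

section OrderedField

variable {κ K : Type*} [Fintype κ] [Field K] [LinearOrder K] [IsStrictOrderedRing K]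

lemma half_le_sum_indicator_mul (u : κ → ℕ) (c : κ → K) {d : K} {k : ℕ} (hd : 0 ≤ d)
    (hk : 0 < k) (hu : ∑ j, u j ≤ k) (hdu : d ≤ ∑ j, u j * c j) :
    d / 2 ≤ ∑ j, ({j | d / (2 * k) ≤ c j}.indicator u j : ℕ) * c j := by
  have ht : 0 ≤ d / (2 * k) := by positivity
  have hsmall : (∑ j, u j) • (d / (2 * k)) ≤ d / 2 :=
    calc (∑ j, u j) • (d / (2 * k)) ≤ k • (d / (2 * k)) := nsmul_le_nsmul_left ht hu
      _ = d / 2 := by rw [nsmul_eq_mul]; field_simp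
  have hsplit := sum_nsmul_le_sum_indicator_nsmul_add u c ht
  simp only [nsmul_eq_mul] at hsplit hsmall
  linarith

lemma exists_le_sum_le_div_two_mul_le_sum_mul (u : κ → ℕ) (c : κ → K) {d ρ : K} {k : ℕ}
    (hd : 0 ≤ d) (hk : 0 < k) (hρ : 1 ≤ ρ) (hu : ∀ j, 0 < u j → d / (2 * k) ≤ c j)
    (hdu : d / ρ ≤ ∑ j, u j * c j) :
    ∃ v ≤ u, ∑ j, v j ≤ k ∧ d / (2 * ρ) ≤ ∑ j, v j * c j := by
  obtain ⟨v, hvu, hvk, hv⟩ := exists_le_sum_le_min_le_sum_nsmul u c hu k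
  simp only [nsmul_eq_mul] at hv
  refine ⟨v, hvu, hvk, (le_min ?_ ?_).trans hv⟩
  · calc d / (2 * ρ) ≤ d / ρ := by gcongr; linarith
      _ ≤ ∑ j, u j * c j := hdu
  · calc d / (2 * ρ) ≤ d / 2 := by gcongr; linarith
      _ = k * (d / (2 * k)) := by field_simp

end OrderedField

theorem cckp_restricted_assignment_reduction_general {ι κ K : Type*} [Fintype ι] [Fintype κ]
    [Field K] [LinearOrder K] [IsStrictOrderedRing K]
    (D : ι → K) (hD : ∀ i, 0 ≤ D i) (f : ι → ℕ) (hf : ∀ i, 0 < f i) (c : κ → K) (s : κ → ℕ) :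
    ((∃ nn : ι → κ → ℕ,
        (∀ j, ∑ i, nn i j ≤ s j) ∧
        (∀ i, ∑ j, nn i j ≤ f i) ∧
        (∀ i, D i ≤ ∑ j, nn i j * c j)) →
      ∃ nn' : ι → κ → ℕ,
        (∀ j, ∑ i, nn' i j ≤ s j) ∧
        (∀ i, ∑ j, nn' i j ≤ f i) ∧
        (∀ i j, 0 < nn' i j → D i / (2 * f i) ≤ c j) ∧
        (∀ i, D i / 2 ≤ ∑ j, nn' i j * c j)) ∧
    (∀ ρ : K, 1 ≤ ρ →
      (∃ nn : ι → κ → ℕ,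
        (∀ j, ∑ i, nn i j ≤ s j) ∧
        (∀ i j, 0 < nn i j → D i / (2 * f i) ≤ c j) ∧
        (∀ i, D i / ρ ≤ ∑ j, nn i j * c j)) →
      ∃ nn' : ι → κ → ℕ,
        (∀ j, ∑ i, nn' i j ≤ s j) ∧
        (∀ i, ∑ j, nn' i j ≤ f i) ∧
        (∀ i, D i / (2 * ρ) ≤ ∑ j, nn' i j * c j)) := by
  constructor
  · rintro ⟨nn, hsupply, hcard, hdemand⟩
    let allowed (i : ι) : Set κ := {j | D i / (2 * f i) ≤ c j}
    have hle (i : ι) : (allowed i).indicator (nn i) ≤ nn i := Set.indicator_le_self _ _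
    exact ⟨fun i => (allowed i).indicator (nn i),
      fun j => (sum_le_sum fun i _ => hle i j).trans (hsupply j),
      fun i => (sum_le_sum fun j _ => hle i j).trans (hcard i),
      fun i j hpos => Set.mem_of_indicator_ne_zero (s := allowed i) hpos.ne',
      fun i => half_le_sum_indicator_mul (nn i) c (hD i) (hf i) (hcard i) (hdemand i)⟩
  · rintro ρ hρ ⟨nn, hsupply, hallowed, hdemand⟩
    choose v hle hcard hv using fun i =>
      exists_le_sum_le_div_two_mul_le_sum_mul (nn i) c (hD i) (hf i) hρ (hallowed i) (hdemand i)
    exact ⟨v, fun j => (sum_le_sum fun i _ => hle i j).trans (hsupply j), hcard, hv⟩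

/-- Reduction between CCKP (`Q|f_i|C_min`) and the restricted-assignment problem
`Q|restr|C_min` in which job type `j` is allowed for machine `i` iff `c j ≥ D i / (2 f i)`.
(a) Any allocation respecting supplies and cardinality bounds and meeting the demands can be
turned into one supported on allowed pairs meeting half the demands.
(b) Conversely, for any `ρ ≥ 1`, any allocation supported on allowed pairs (with no
cardinality restriction) meeting a `1/ρ` fraction of the demands can be turned into one
also respecting the cardinality bounds and meeting a `1/(2ρ)` fraction of the demands. -/
theorem cckp_restricted_assignment_reduction (m n : ℕ)
    (D : Fin m → ℝ) (hD : ∀ i, 0 < D i)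
    (f : Fin m → ℕ) (hf : ∀ i, 0 < f i)
    (c : Fin n → ℝ) (hc : ∀ j, 0 < c j)
    (s : Fin n → ℕ) :
    ((∃ nn : Fin m → Fin n → ℕ,
        (∀ j, ∑ i, nn i j ≤ s j) ∧
        (∀ i, ∑ j, nn i j ≤ f i) ∧
        (∀ i, D i ≤ ∑ j, (nn i j : ℝ) * c j)) →
      ∃ nn' : Fin m → Fin n → ℕ,
        (∀ j, ∑ i, nn' i j ≤ s j) ∧
        (∀ i, ∑ j, nn' i j ≤ f i) ∧
        (∀ i j, 0 < nn' i j → D i / (2 * (f i : ℝ)) ≤ c j) ∧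
        (∀ i, D i / 2 ≤ ∑ j, (nn' i j : ℝ) * c j)) ∧
    (∀ ρ : ℝ, 1 ≤ ρ →
      (∃ nn : Fin m → Fin n → ℕ,
        (∀ j, ∑ i, nn i j ≤ s j) ∧
        (∀ i j, 0 < nn i j → D i / (2 * (f i : ℝ)) ≤ c j) ∧
        (∀ i, D i / ρ ≤ ∑ j, (nn i j : ℝ) * c j)) →
      ∃ nn' : Fin m → Fin n → ℕ,
        (∀ j, ∑ i, nn' i j ≤ s j) ∧
        (∀ i, ∑ j, nn' i j ≤ f i) ∧
        (∀ i, D i / (2 * ρ) ≤ ∑ j, (nn' i j : ℝ) * c j)) := 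
  cckp_restricted_assignment_reduction_general D (fun i => (hD i).le) f hf c s
end
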